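/- Main theorem: Let n be an odd prime and r₁, s₁, r₂, s₂ nonzero elements of ZMod n with r₁s₂ ≠ r₂s₁. Then there exists a constant C > 0 (independent of n) such that the operator norm of ½(M(r₁,s₁) + M(r₂,s₂)) is at most 1 − C/n. -/

import Mathlib

open Matrix

/-- `ω n = e^{2πi/n}`. -/
noncomputable def omg (n : ℕ) : ℂ := Complex.exp (2 * Real.pi * Complex.I / n)

/-- The cyclic shift matrix: `S_{i,j} = 1` iff `i + 1 = j` in `ZMod n`. -/
noncomputable def Smat (n : ℕ) : Matrix (ZMod n) (ZMod n) ℂ :=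
  Matrix.of fun i j => if i + 1 = j then 1 else 0

/-- The diagonal matrix `R` with `R_{j,j} = ω^j`. -/
noncomputable def Rmat (n : ℕ) : Matrix (ZMod n) (ZMod n) ℂ :=
  Matrix.diagonal fun j => omg n ^ (j.val)

/-- The twisted circulant `A(r,s) = R^r S^s`. -/
noncomputable def Amat (n : ℕ) [NeZero n] (r s : ZMod n) : Matrix (ZMod n) (ZMod n) ℂ :=
  Rmat n ^ r.val * Smat n ^ s.val

/-- The Hermitian matrix `M(r,s) = ½(A(r,s) + A(r,s)*)`. -/
noncomputable def Mmat (n : ℕ) [NeZero n] (r s : ZMod n) : Matrix (ZMod n) (ZMod n) ℂ :=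
  (1 / 2 : ℂ) • (Amat n r s + (Amat n r s)ᴴ)

/-- The ℓ²-operator norm of a matrix. -/
noncomputable def opNorm {n : ℕ} [NeZero n] (M : Matrix (ZMod n) (ZMod n) ℂ) : ℝ :=
  ‖Matrix.toEuclideanCLM (𝕜 := ℂ) M‖


section Abstract

variable {E : Type*} [NormedAddCommGroup E] [InnerProductSpace ℂ E] [CompleteSpace E]

lemma unitary_norm_apply (U : E →L[ℂ] E) (hU : star U * U = 1) (x : E) : ‖U x‖ = ‖x‖ := by
  have h1 : inner ℂ (U x) (U x) = inner ℂ x x := by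
    rw [← ContinuousLinearMap.adjoint_inner_right, ← ContinuousLinearMap.star_eq_adjoint,
      ← mul_apply_eq_comp, hU, one_apply_eq_self]
  rw [inner_self_eq_norm_sq_to_K, inner_self_eq_norm_sq_to_K] at h1
  have h2 : ‖U x‖ ^ 2 = ‖x‖ ^ 2 := by exact_mod_cast h1
  exact (sq_eq_sq₀ (norm_nonneg _) (norm_nonneg _)).1 h2

lemma unitary_star_sub (U : E →L[ℂ] E) (hU : star U * U = 1) (hU' : U * star U = 1) (x : E) :
    ‖(star U) x - x‖ = ‖U x - x‖ := by
  have h := unitary_norm_apply U hU ((star U) x - x)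
  rw [map_sub, ← mul_apply_eq_comp, hU', one_apply_eq_self] at h
  rw [← h, norm_sub_rev]

lemma unitary_re_inner (U : E →L[ℂ] E) (hU : star U * U = 1) (x : E) :
    (inner ℂ (U x) x).re = ‖x‖ ^ 2 - ‖U x - x‖ ^ 2 / 2 := by
  have h := norm_sub_sq (𝕜 := ℂ) (U x) x
  rw [unitary_norm_apply U hU x] at h
  have h3 : (inner ℂ (U x) x).re = RCLike.re (inner ℂ (U x) x) := rfl
  rw [h3]
  linarith

lemma comm_bound (U V : E →L[ℂ] E) (ζ : ℂ) (hU : star U * U = 1) (hU' : U * star U = 1)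
    (hV : star V * V = 1) (hV' : V * star V = 1) (h : U * V = ζ • (V * U)) (hz : ‖ζ - 1‖ ≤ 2)
    (x : E) : ‖ζ - 1‖ * ‖x‖ ^ 2 ≤ 16 * (‖U x - x‖ ^ 2 + ‖V x - x‖ ^ 2) := by
  have hc : U (V x) = ζ • V (U x) := by
    have := congrArg (fun T : E →L[ℂ] E => T x) h
    simpa using this
  have aU : ∀ y, inner ℂ ((star U) x) y = inner ℂ x (U y) := fun y => by
    rw [ContinuousLinearMap.star_eq_adjoint, ContinuousLinearMap.adjoint_inner_left]
  have aV : ∀ y, inner ℂ ((star V) x) y = inner ℂ x (V y) := fun y => by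
    rw [ContinuousLinearMap.star_eq_adjoint, ContinuousLinearMap.adjoint_inner_left]
  have e1 : inner ℂ ((star U) x - x) (V x - x) - inner ℂ ((star V) x - x) (U x - x)
      = (ζ - 1) * inner ℂ x (V (U x)) := by
    simp only [inner_sub_left, inner_sub_right, aU, aV, hc, inner_smul_right]
    ring
  set a := ‖U x - x‖ with ha
  set b := ‖V x - x‖ with hb
  set N := ‖x‖ with hN
  have ha0 : 0 ≤ a := norm_nonneg _
  have hb0 : 0 ≤ b := norm_nonneg _
  have hN0 : 0 ≤ N := norm_nonneg _
  have hd0 : 0 ≤ ‖ζ - 1‖ := norm_nonneg _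
  have e2 : ‖ζ - 1‖ * ‖inner ℂ x (V (U x))‖ ≤ 2 * (a * b) := by
    rw [← norm_mul, ← e1]
    have i1 := norm_inner_le_norm (𝕜 := ℂ) ((star U) x - x) (V x - x)
    have i2 := norm_inner_le_norm (𝕜 := ℂ) ((star V) x - x) (U x - x)
    rw [unitary_star_sub U hU hU'] at i1
    rw [unitary_star_sub V hV hV'] at i2
    have := norm_sub_le (inner ℂ ((star U) x - x) (V x - x)) (inner ℂ ((star V) x - x) (U x - x))
    nlinarith
  have e3 : N * (N - (a + b)) ≤ ‖inner ℂ x (V (U x))‖ := by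
    have i0 : inner ℂ x (V (U x)) = inner ℂ x x + inner ℂ x (V (U x) - x) := by
      rw [inner_sub_right]; ring
    have i1 := norm_inner_le_norm (𝕜 := ℂ) x (V (U x) - x)
    have i2 : ‖V (U x) - x‖ ≤ a + b := by
      have : V (U x) - x = V (U x - x) + (V x - x) := by rw [map_sub]; abel
      rw [this]
      refine (norm_add_le _ _).trans ?_
      rw [unitary_norm_apply V hV]
    have i3 : ‖inner ℂ x x‖ = N * N := by
      rw [inner_self_eq_norm_sq_to_K]; simp [← hN, sq]
    have i4 := norm_sub_le (inner ℂ x (V (U x))) (inner ℂ x (V (U x) - x))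
    have i5 : inner ℂ x (V (U x)) - inner ℂ x (V (U x) - x) = inner ℂ x x := by rw [i0]; ring
    rw [i5, i3] at i4
    have i6 := mul_le_mul_of_nonneg_left i2 hN0
    linarith
  by_cases hab : a + b ≤ N / 2
  · have : N * (N / 2) ≤ ‖inner ℂ x (V (U x))‖ := by
      refine le_trans ?_ e3
      gcongr; linarith
    have := mul_le_mul_of_nonneg_left this hd0
    nlinarith [sq_nonneg (a - b)]
  · push Not at hab
    have h1 : (N / 2) ^ 2 ≤ (a + b) ^ 2 := by gcongr
    have h2 : ‖ζ - 1‖ * N ^ 2 ≤ 2 * N ^ 2 := by gcongr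
    nlinarith [sq_nonneg (a - b)]

lemma upper_bound (U V : E →L[ℂ] E) (ζ : ℂ) (hU : star U * U = 1) (hU' : U * star U = 1)
    (hV : star V * V = 1) (hV' : V * star V = 1) (h : U * V = ζ • (V * U)) (hz : ‖ζ - 1‖ ≤ 2)
    (x : E) : (inner ℂ ((U + star U + (V + star V)) x) x).re ≤ (4 - ‖ζ - 1‖ / 16) * ‖x‖ ^ 2 := by
  have hb := comm_bound U V ζ hU hU' hV hV' h hz x
  have h1 := unitary_re_inner U hU x
  have h2 := unitary_re_inner V hV x
  have h3 := unitary_re_inner (star U) (by simpa using hU') x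
  have h4 := unitary_re_inner (star V) (by simpa using hV') x
  rw [unitary_star_sub U hU hU'] at h3
  rw [unitary_star_sub V hV hV'] at h4
  simp only [_root_.add_apply, inner_add_left, Complex.add_re]
  rw [h1, h2, h3, h4]
  nlinarith

lemma norm_bound (U V : E →L[ℂ] E) (ζ : ℂ) (hU : star U * U = 1) (hU' : U * star U = 1)
    (hV : star V * V = 1) (hV' : V * star V = 1) (h : U * V = ζ • (V * U)) (hz : ‖ζ - 1‖ ≤ 2) :
    ‖U + star U + (V + star V)‖ ≤ 4 - ‖ζ - 1‖ / 16 := by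
  have hsa : IsSelfAdjoint (U + star U + (V + star V)) :=
    (IsSelfAdjoint.add_star_self U).add (IsSelfAdjoint.add_star_self V)
  rw [ContinuousLinearMap.norm_eq_iSup_rayleighQuotient _ hsa.isSymmetric]
  refine ciSup_le fun x => ?_
  have hup := upper_bound U V ζ hU hU' hV hV' h hz x
  have hlo := upper_bound (-U) (-V) ζ (by simpa using hU) (by simpa using hU')
    (by simpa using hV) (by simpa using hV') (by simpa using h) hz x
  have e : -U + star (-U) + (-V + star (-V)) = -(U + star U + (V + star V)) := by
    rw [star_neg, star_neg]; abel
  rw [e, _root_.neg_apply, inner_neg_left, Complex.neg_re] at hlo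
  rcases eq_or_ne x 0 with rfl | hx
  · simp; linarith
  · have hp : 0 < ‖x‖ ^ 2 := by positivity
    rw [ContinuousLinearMap.rayleighQuotient, ContinuousLinearMap.reApplyInnerSelf_apply, abs_div,
      abs_of_pos hp, div_le_iff₀ hp, abs_le]
    constructor
    · change _ ≤ (inner ℂ ((U + star U + (V + star V)) x) x).re
      linarith
    · exact hup

end Abstract

lemma omg_pow (n : ℕ) [NeZero n] (j : ℕ) : omg n ^ j = ZMod.stdAddChar (N := n) (j : ZMod n) := by
  have := ZMod.stdAddChar_coe (N := n) (j : ℤ)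
  rw [Int.cast_natCast] at this
  rw [this, omg, ← Complex.exp_nat_mul]
  congr 1
  push_cast
  ring

lemma Smat_pow (n : ℕ) [NeZero n] (k : ℕ) :
    Smat n ^ k = Matrix.of fun i j => if i + (k : ZMod n) = j then 1 else 0 := by
  induction k with
  | zero => ext i j; simp [Matrix.one_apply]
  | succ k ih =>
    rw [pow_succ, ih]
    ext i j
    simp only [Smat, Matrix.mul_apply, Matrix.of_apply, ite_mul, zero_mul, one_mul,
      Finset.sum_ite_eq, Finset.mem_univ, if_true, add_assoc, Nat.cast_add, Nat.cast_one]

lemma Amat_apply (n : ℕ) [NeZero n] (r s i j : ZMod n) :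
    Amat n r s i j = if i + s = j then ZMod.stdAddChar (N := n) (i * r) else 0 := by
  rw [Amat, Smat_pow, Rmat, Matrix.diagonal_pow, Matrix.diagonal_mul]
  have h : ZMod.stdAddChar (N := n) i ^ r.val = ZMod.stdAddChar (N := n) (i * r) := by
    rw [← AddChar.map_nsmul_eq_pow, nsmul_eq_mul, ZMod.natCast_zmod_val, mul_comm]
  simp [omg_pow, h]

lemma Amat_comm (n : ℕ) [NeZero n] (r₁ s₁ r₂ s₂ : ZMod n) :
    Amat n r₁ s₁ * Amat n r₂ s₂ =
      ZMod.stdAddChar (N := n) (s₁ * r₂ - s₂ * r₁) • (Amat n r₂ s₂ * Amat n r₁ s₁) := by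
  ext i j
  simp only [Matrix.mul_apply, Matrix.smul_apply, Amat_apply, smul_eq_mul, ite_mul,
    zero_mul, Finset.sum_ite_eq, Finset.mem_univ, if_true]
  simp only [mul_ite, mul_zero, ← AddChar.map_add_eq_mul]
  rw [show i + s₁ + s₂ = i + s₂ + s₁ by ring]
  split_ifs
  · congr 1; ring
  · rfl

lemma Amat_unit (n : ℕ) [NeZero n] (r s : ZMod n) : Amat n r s * star (Amat n r s) = 1 := by
  ext i j
  simp only [Matrix.mul_apply, Matrix.star_apply, Amat_apply, ite_mul, zero_mul,
    Finset.sum_ite_eq, Finset.mem_univ, if_true, Matrix.one_apply]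
  by_cases h : i = j
  · subst h
    simp only [if_true]
    rw [← starRingEnd_apply, Complex.mul_conj, Complex.normSq_eq_norm_sq, AddChar.norm_apply]
    simp
  · have : ¬ (j + s = i + s) := fun h' => h (add_right_cancel h').symm
    simp [h, this]

lemma root_bound (n : ℕ) [NeZero n] (z : ℂ) (hz : z ^ n = 1) (h1 : z ≠ 1) :
    1 / (n : ℝ) ≤ ‖z - 1‖ := by
  have hn : (0 : ℝ) < n := by exact_mod_cast Nat.pos_of_ne_zero (NeZero.ne n)
  have hnorm : ‖z‖ = 1 := Complex.norm_eq_one_of_pow_eq_one hz (NeZero.ne n)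
  have hs : ∑ j ∈ Finset.range n, z ^ j = 0 := by
    rw [geom_sum_eq h1, hz]; simp
  have hk : ∀ j : ℕ, ‖1 - z ^ j‖ ≤ j * ‖z - 1‖ := by
    intro j
    induction j with
    | zero => simp
    | succ j ih =>
      have : 1 - z ^ (j + 1) = (1 - z ^ j) - z ^ j * (z - 1) := by ring
      rw [this]
      refine (norm_sub_le _ _).trans ?_
      rw [norm_mul, norm_pow, hnorm, one_pow]
      push_cast
      linarith
  have hsum : (n : ℂ) = ∑ j ∈ Finset.range n, (1 - z ^ j) := by
    rw [Finset.sum_sub_distrib, hs]; simp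
  have : (n : ℝ) ≤ n * (n * ‖z - 1‖) := by
    calc (n : ℝ) = ‖(n : ℂ)‖ := by simp
      _ ≤ ∑ j ∈ Finset.range n, ‖1 - z ^ j‖ := by rw [hsum]; exact norm_sum_le _ _
      _ ≤ ∑ j ∈ Finset.range n, (n * ‖z - 1‖) := by
        refine Finset.sum_le_sum fun j hj => (hk j).trans ?_
        have : (j : ℝ) ≤ n := by exact_mod_cast (Finset.mem_range.1 hj).le
        gcongr
      _ = n * (n * ‖z - 1‖) := by simp
  rw [div_le_iff₀ hn]
  nlinarith

theorem stmt14 :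
    ∃ C > (0 : ℝ), ∀ (n : ℕ) [NeZero n] [Fact (Nat.Prime n)], Odd n →
      ∀ r₁ s₁ r₂ s₂ : ZMod n, r₁ ≠ 0 → s₁ ≠ 0 → r₂ ≠ 0 → s₂ ≠ 0 →
        r₁ * s₂ ≠ r₂ * s₁ →
        opNorm ((1 / 2 : ℂ) • (Mmat n r₁ s₁ + Mmat n r₂ s₂)) ≤ 1 - C / n := by
  refine ⟨1 / 64, by norm_num, ?_⟩
  intro n _ _ _ r₁ s₁ r₂ s₂ _ _ _ _ hne
  set ζ : ℂ := ZMod.stdAddChar (N := n) (s₁ * r₂ - s₂ * r₁) with hζ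
  have hζ1 : ζ ≠ 1 := by
    intro h
    rw [hζ, ← AddChar.map_zero_eq_one (ZMod.stdAddChar (N := n))] at h
    have := ZMod.injective_stdAddChar h
    apply hne
    linear_combination -this
  have hζn : ζ ^ n = 1 := by
    rw [hζ, ← AddChar.map_nsmul_eq_pow]
    simp
  have hζ2 : ‖ζ - 1‖ ≤ 2 := by
    refine (norm_sub_le _ _).trans ?_
    rw [hζ, AddChar.norm_apply]; norm_num
  have hd := root_bound n ζ hζn hζ1
  set Φ := Matrix.toEuclideanCLM (n := ZMod n) (𝕜 := ℂ) with hΦ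
  have u : ∀ r s : ZMod n, Φ (Amat n r s) * star (Φ (Amat n r s)) = 1 := fun r s => by
    rw [← map_star, ← map_mul, Amat_unit, map_one]
  have u' : ∀ r s : ZMod n, star (Φ (Amat n r s)) * Φ (Amat n r s) = 1 := fun r s => by
    rw [← map_star, ← map_mul, mul_eq_one_comm.1 (Amat_unit n r s), map_one]
  have hcomm : Φ (Amat n r₁ s₁) * Φ (Amat n r₂ s₂)
      = ζ • (Φ (Amat n r₂ s₂) * Φ (Amat n r₁ s₁)) := by
    rw [← map_mul, Amat_comm, map_smul, map_mul]
  have hb := norm_bound _ _ ζ (u' r₁ s₁) (u r₁ s₁) (u' r₂ s₂) (u r₂ s₂) hcomm hζ2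
  have e : (1 / 2 : ℂ) • (Mmat n r₁ s₁ + Mmat n r₂ s₂) = (1 / 4 : ℂ) •
      (Amat n r₁ s₁ + star (Amat n r₁ s₁) + (Amat n r₂ s₂ + star (Amat n r₂ s₂))) := by
    rw [Mmat, Mmat, ← smul_add, smul_smul, Matrix.star_eq_conjTranspose,
      Matrix.star_eq_conjTranspose]
    norm_num
  rw [opNorm, e, ← hΦ, map_smul, map_add, map_add, map_add, map_star, map_star, norm_smul]
  have h4 : ‖(1 / 4 : ℂ)‖ = 1 / 4 := by norm_num
  rw [h4]
  have : (1 / 64 : ℝ) / n = (1 / n) / 64 := by ring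
  rw [this]
  linarith
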